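/- arXiv:0904.4283 — 2 statements merged into one kernel-verified Lean document; each statement's English description precedes it below -/
import Mathlib

section
/- Let h₁, h₂, h₃, … be independent random vectors in ℂ^L with h₂, h₃, … identically distributed, P(h₁ = 0) = 0, and 0 in the topological support of the common law of h₂. Define β_K := min_{2 ≤ k ≤ K+1} |⟨h_k, h₁⟩|² / ‖h₁‖². Then for every ε > 0, lim_{K→∞} P( β_K > ε ) = 0, i.e., β_K converges to 0 in probability. -/
open MeasureTheory ProbabilityTheory Filter

/-- Equip `ℂ^L` with its Borel σ-algebra. -/
noncomputable instance (L : ℕ) : MeasurableSpace (EuclideanSpace ℂ (Fin L)) := borel _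
instance (L : ℕ) : BorelSpace (EuclideanSpace ℂ (Fin L)) := ⟨rfl⟩

/-!
By Cauchy–Schwarz, the normalised correlation of `h k` with `h 0` is at most `‖h k‖ ^ 2`, a bound
free of `h 0`, so there is no need to condition on `h 0`. Hence `β_K > ε` forces all `K` candidates
into the closed set `{x | ε ≤ ‖x‖ ^ 2}`, which has probability `p < 1` under the common law because
`0` is in its support, and by independence `P(β_K > ε) ≤ p ^ K`.
-/

section IdenticallyDistributed

variable {Ω Ω' E : Type*} [MeasurableSpace Ω] [MeasurableSpace Ω'] [MeasurableSpace E]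
  {μ : Measure Ω} {ν : Measure Ω'} {Y : Ω' → E} {S : Set E}

theorem measure_biInter_preimage_eq_pow {ι : Type*} {X : ι → Ω → E} (hindep : iIndepFun X μ)
    (hident : ∀ i, IdentDistrib (X i) Y μ ν) (hS : MeasurableSet S) (s : Finset ι) :
    μ (⋂ i ∈ s, X i ⁻¹' S) = ν (Y ⁻¹' S) ^ s.card := by
  rw [hindep.measure_inter_preimage_eq_mul s fun _ _ ↦ hS]
  exact Finset.prod_eq_pow_card fun i _ ↦ (hident i).measure_mem_eq hS

theorem tendsto_measure_forall_mem_of_measure_lt_one {X : ℕ → Ω → E} (hindep : iIndepFun X μ)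
    (hident : ∀ k, IdentDistrib (X k) Y μ ν) (hS : MeasurableSet S) (hlt : ν (Y ⁻¹' S) < 1) :
    Tendsto (fun K : ℕ ↦ μ {ω | ∀ k < K, X k ω ∈ S}) atTop (nhds 0) := by
  have hpow (K : ℕ) : μ {ω | ∀ k < K, X k ω ∈ S} = ν (Y ⁻¹' S) ^ K := by
    have hinter : {ω | ∀ k < K, X k ω ∈ S} = ⋂ k ∈ Finset.range K, X k ⁻¹' S := by
      ext ω
      simp
    rw [hinter, measure_biInter_preimage_eq_pow hindep hident hS, Finset.card_range]
  simpa only [hpow] using ENNReal.tendsto_pow_atTop_nhds_zero_of_lt_one hlt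

end IdenticallyDistributed

theorem measure_lt_one_of_isClosed_of_notMem {E : Type*} [TopologicalSpace E] [MeasurableSpace E]
    [OpensMeasurableSpace E] {ν : Measure E} [IsProbabilityMeasure ν] {a : E} {C : Set E}
    (ha : a ∈ ν.support) (hC : IsClosed C) (haC : a ∉ C) : ν C < 1 := by
  refine prob_le_one.lt_of_ne fun hone ↦ haC ?_
  exact Measure.support_subset_of_isClosed hC ((mem_ae_iff_prob_eq_one hC.measurableSet).2 hone) ha

theorem lt_norm_sq_of_mul_norm_sq_lt_norm_inner_sq (𝕜 : Type*) {E : Type*} [RCLike 𝕜]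
    [SeminormedAddCommGroup E] [InnerProductSpace 𝕜 E] {x y : E} {ε : ℝ}
    (hxy : ε * ‖y‖ ^ 2 < ‖inner 𝕜 x y‖ ^ 2) : ε < ‖x‖ ^ 2 := by
  refine lt_of_mul_lt_mul_right ?_ (sq_nonneg ‖y‖)
  calc ε * ‖y‖ ^ 2 < ‖inner 𝕜 x y‖ ^ 2 := hxy
    _ ≤ (‖x‖ * ‖y‖) ^ 2 := by gcongr; exact norm_inner_le_norm x y
    _ = ‖x‖ ^ 2 * ‖y‖ ^ 2 := mul_pow _ _ _

section InnerProductSpace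

variable {Ω E : Type*} (𝕜 : Type*) [MeasurableSpace Ω] {μ : Measure Ω} [IsProbabilityMeasure μ]
  [RCLike 𝕜] [MeasurableSpace E]

theorem tendsto_measure_forall_mul_norm_sq_lt_norm_inner_sq [SeminormedAddCommGroup E]
    [InnerProductSpace 𝕜 E] [OpensMeasurableSpace E] {X : ℕ → Ω → E} (Y : Ω → E)
    (hindep : iIndepFun X μ) (hident : ∀ k, IdentDistrib (X k) (X 0) μ μ)
    (hsupp : 0 ∈ (μ.map (X 0)).support) {ε : ℝ} (hε : 0 < ε) :
    Tendsto (fun K : ℕ ↦ μ {ω | ∀ k < K, ε * ‖Y ω‖ ^ 2 < ‖inner 𝕜 (X k ω) (Y ω)‖ ^ 2})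
      atTop (nhds 0) := by
  have hX : AEMeasurable (X 0) μ := (hident 0).aemeasurable_fst
  have : IsProbabilityMeasure (μ.map (X 0)) := Measure.isProbabilityMeasure_map hX
  have hclosed : IsClosed {x : E | ε ≤ ‖x‖ ^ 2} := isClosed_le (by fun_prop) (by fun_prop)
  have hlt : μ (X 0 ⁻¹' {x | ε ≤ ‖x‖ ^ 2}) < 1 := by
    rw [← Measure.map_apply_of_aemeasurable hX hclosed.measurableSet]
    exact measure_lt_one_of_isClosed_of_notMem hsupp hclosed (by simpa using hε)
  refine tendsto_of_tendsto_of_tendsto_of_le_of_le tendsto_const_nhds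
    (tendsto_measure_forall_mem_of_measure_lt_one hindep hident hclosed.measurableSet hlt)
    (fun _ ↦ zero_le) fun K ↦ measure_mono fun ω hω k hk ↦ ?_
  exact (lt_norm_sq_of_mul_norm_sq_lt_norm_inner_sq 𝕜 (hω k hk)).le

theorem oso_interference_power_tendsto_zero_in_probability_general [NormedAddCommGroup E]
    [InnerProductSpace 𝕜 E] [OpensMeasurableSpace E] {h : ℕ → Ω → E}
    (hindep : iIndepFun (fun k ↦ h (k + 1)) μ) (hprim : ∀ᵐ ω ∂μ, h 0 ω ≠ 0)
    (hident : ∀ k, IdentDistrib (h (k + 1)) (h 1) μ μ)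
    (hsupp : 0 ∈ (μ.map (h 1)).support) {ε : ℝ} (hε : 0 < ε) :
    Tendsto (fun K : ℕ ↦ μ {ω | ε < sInf ((fun k ↦
        ‖inner 𝕜 (h k ω) (h 0 ω)‖ ^ 2 / ‖h 0 ω‖ ^ 2) '' Set.Icc 1 K)})
      atTop (nhds 0) := by
  refine tendsto_of_tendsto_of_tendsto_of_le_of_le tendsto_const_nhds
    (tendsto_measure_forall_mul_norm_sq_lt_norm_inner_sq 𝕜 (h 0) hindep hident hsupp hε)
    (fun _ ↦ zero_le) fun K ↦ measure_mono_ae ?_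
  filter_upwards [hprim] with ω hω hlt k hk
  have hnorm : 0 < ‖h 0 ω‖ ^ 2 := by positivity
  rw [← lt_div_iff₀ hnorm]
  exact hlt.trans_le <| csInf_le ((Set.finite_Icc 1 K).image _).bddBelow
    (Set.mem_image_of_mem _ ⟨k.succ_pos, hk⟩)

end InnerProductSpace

/-- Convergence in probability of the interference power.  Let `h 0, h 1, h 2, …` be
independent random vectors in `ℂ^L` (here `h 0` plays the role of the primary channel
`h₁` of the paper and `h k`, `k ≥ 1`, the identically distributed candidate channels
`h₂, h₃, …`), with `P(h 0 = 0) = 0` and `0` in the topological support of the common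
law of the candidates.  With `β_K := min_{1 ≤ k ≤ K} ‖⟨h k, h 0⟩‖² / ‖h 0‖²`, for every
`ε > 0` one has `P(β_K > ε) → 0` as `K → ∞`, i.e. `β_K → 0` in probability. -/
theorem oso_interference_power_tendsto_zero_in_probability
    {Ω : Type*} [MeasurableSpace Ω] (μ : Measure Ω) [IsProbabilityMeasure μ]
    (L : ℕ) (h : ℕ → Ω → EuclideanSpace ℂ (Fin L))
    (hmeas : ∀ k, Measurable (h k))
    (hindep : iIndepFun h μ)
    (hprim : μ {ω | h 0 ω = 0} = 0)
    (hident : ∀ k, 1 ≤ k → Measure.map (h k) μ = Measure.map (h 1) μ)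
    (hsupp : ∀ U : Set (EuclideanSpace ℂ (Fin L)), IsOpen U →
      (0 : EuclideanSpace ℂ (Fin L)) ∈ U → 0 < Measure.map (h 1) μ U) :
    ∀ ε : ℝ, 0 < ε →
      Tendsto (fun K : ℕ => μ {ω | ε < sInf ((fun k =>
          ‖(inner ℂ (h k ω) (h 0 ω) : ℂ)‖ ^ 2 / ‖h 0 ω‖ ^ 2) '' Set.Icc 1 K)})
        atTop (nhds 0) := fun _ hε ↦
  oso_interference_power_tendsto_zero_in_probability_general ℂ
    (hindep.precomp (add_left_injective 1)) (measure_eq_zero_iff_ae_notMem.1 hprim)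
    (fun k ↦ ⟨(hmeas _).aemeasurable, (hmeas 1).aemeasurable, hident _ k.succ_pos⟩)
    ((nhds_basis_opens 0).mem_measureSupport.2 fun U hU ↦ hsupp U hU.2 hU.1) hε
end

section
/- Let h₁, h₂, h₃, … be independent, identically distributed random vectors in ℂ^L whose common law has full topological support (every nonempty open subset of ℂ^L has positive probability) and no atom at 0 (P(h₁ = 0) = 0). Define β_K := min_{2 ≤ k ≤ K+1} |⟨h_k, h₁⟩|² / ‖h₁‖². Then β_K converges to 0 almost surely as K → ∞. -/
open MeasureTheory ProbabilityTheory Filter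

/-!
A candidate whose channel is short interferes little, whatever the direction of the primary channel:
the interference power of `x` on `u` is continuous in `x` and vanishes at `x = 0`. By the second
Borel–Cantelli lemma, almost surely the candidates enter every neighbourhood of `0` infinitely
often, so `0` is a cluster point of their interference powers, and the running minimum of a sequence
converges to any cluster point bounding the sequence from below.
-/

open scoped ENNReal Topology

section RunningInfimum

variable {ι α : Type*} [Preorder ι] [ConditionallyCompleteLinearOrder α] [TopologicalSpace α]
  [OrderTopology α]

theorem tendsto_csInf_image_Icc_of_mapClusterPt {f : ι → α} {a : α} (m : ι)
    (hle : ∀ i, a ≤ f i) (hcluster : MapClusterPt a atTop f) :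
    Tendsto (fun n => sInf (f '' Set.Icc m n)) atTop (𝓝 a) := by
  have hlower (s : Set ι) : a ∈ lowerBounds (f '' s) := by
    rintro _ ⟨i, -, rfl⟩
    exact hle i
  refine tendsto_order.2 ⟨fun b hba => ?_, fun b hab => ?_⟩
  · filter_upwards [eventually_ge_atTop m] with n hmn
    have hne : (f '' Set.Icc m n).Nonempty := (Set.nonempty_Icc.2 hmn).image f
    exact hba.trans_le (le_csInf hne (hlower _))
  · have hfreq : ∃ᶠ i in atTop, f i < b := hcluster.frequently (Iio_mem_nhds hab)
    obtain ⟨i, hib, hmi⟩ := (hfreq.and_eventually (eventually_ge_atTop m)).exists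
    filter_upwards [eventually_ge_atTop i] with n hin
    have hmem : f i ∈ f '' Set.Icc m n := Set.mem_image_of_mem f ⟨hmi, hin⟩
    exact (csInf_le ⟨a, hlower _⟩ hmem).trans_lt hib

end RunningInfimum

section BorelCantelli

variable {Ω : Type*} [MeasurableSpace Ω] {μ : Measure Ω}

theorem iIndepSet_preimage_of_iIndepFun {ι : Type*} {E : ι → Type*} [∀ i, MeasurableSpace (E i)]
    {X : ∀ i, Ω → E i} {s : ∀ i, Set (E i)} (hX : ∀ i, Measurable (X i)) (hindep : iIndepFun X μ)
    (hs : ∀ i, MeasurableSet (s i)) :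
    iIndepSet (fun i => X i ⁻¹' s i) μ :=
  (iIndepSet_iff_meas_biInter fun i => hX i (hs i)).2 fun S =>
    hindep.measure_inter_preimage_eq_mul S fun i _ => hs i

theorem ae_frequently_mem_of_tsum_measure_preimage_eq_top {E : ℕ → Type*}
    [∀ k, MeasurableSpace (E k)] {X : ∀ k, Ω → E k} {s : ∀ k, Set (E k)}
    (hX : ∀ k, Measurable (X k)) (hindep : iIndepFun X μ) (hs : ∀ k, MeasurableSet (s k))
    (hsum : ∑' k, μ (X k ⁻¹' s k) = ∞) :
    ∀ᵐ ω ∂μ, ∃ᶠ k in atTop, X k ω ∈ s k := by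
  have : IsProbabilityMeasure μ := hindep.isProbabilityMeasure
  have hpre (k : ℕ) : MeasurableSet (X k ⁻¹' s k) := hX k (hs k)
  have hlimsup : μ (limsup (fun k => X k ⁻¹' s k) atTop) = 1 :=
    measure_limsup_eq_one hpre (iIndepSet_preimage_of_iIndepFun hX hindep hs) hsum
  filter_upwards [(mem_ae_iff_prob_eq_one (.measurableSet_limsup hpre)).2 hlimsup] with ω hω
  exact mem_limsup_iff_frequently_mem.1 hω

theorem ae_mapClusterPt_of_tsum_measure_preimage_eq_top {E : Type*} [MeasurableSpace E]
    [TopologicalSpace E] [OpensMeasurableSpace E] {X : ℕ → Ω → E} {x : E}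
    [(𝓝 x).IsCountablyGenerated] (hX : ∀ k, Measurable (X k)) (hindep : iIndepFun X μ)
    (hsum : ∀ U : Set E, IsOpen U → x ∈ U → ∑' k, μ (X k ⁻¹' U) = ∞) :
    ∀ᵐ ω ∂μ, MapClusterPt x atTop (fun k => X k ω) := by
  obtain ⟨U, hU, hbasis⟩ := (nhds_basis_opens x).exists_antitone_subbasis
  have hfreq (n : ℕ) : ∀ᵐ ω ∂μ, ∃ᶠ k in atTop, X k ω ∈ U n :=
    ae_frequently_mem_of_tsum_measure_preimage_eq_top hX hindep (fun _ => (hU n).2.measurableSet)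
      (hsum (U n) (hU n).2 (hU n).1)
  filter_upwards [ae_all_iff.2 hfreq] with ω hω
  exact hbasis.mapClusterPt_iff_frequently.2 fun n _ => hω n

theorem tsum_measure_preimage_eq_top_of_map_eq {ι E : Type*} [Infinite ι] [MeasurableSpace E]
    {X : ι → Ω → E} {ν : Measure E} {s : Set E} (hX : ∀ i, AEMeasurable (X i) μ)
    (hlaw : ∀ i, μ.map (X i) = ν) (hs : MeasurableSet s) (hνs : ν s ≠ 0) :
    ∑' i, μ (X i ⁻¹' s) = ∞ := by
  have hconst (i : ι) : μ (X i ⁻¹' s) = ν s := by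
    rw [← hlaw i, Measure.map_apply_of_aemeasurable (hX i) hs]
  simpa only [hconst] using ENNReal.tsum_const_eq_top_of_ne_zero hνs

end BorelCantelli

section InterferencePower

variable {𝕜 E : Type*} [RCLike 𝕜] [NormedAddCommGroup E] [InnerProductSpace 𝕜 E]

theorem mapClusterPt_norm_inner_sq_div_norm_sq {ι : Type*} {l : Filter ι} {x : ι → E}
    (hx : MapClusterPt 0 l x) (u : E) :
    MapClusterPt 0 l (fun i => ‖inner 𝕜 (x i) u‖ ^ 2 / ‖u‖ ^ 2) := by
  have hcont : Continuous fun y : E => ‖inner 𝕜 y u‖ ^ 2 / ‖u‖ ^ 2 := by fun_prop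
  simpa [Function.comp_def] using hx.continuousAt_comp hcont.continuousAt

theorem oso_interference_power_tendsto_zero_ae_iid_full_support_general
    [MeasurableSpace E] [OpensMeasurableSpace E] {Ω : Type*} [MeasurableSpace Ω] {μ : Measure Ω}
    {h : ℕ → Ω → E} (hmeas : ∀ k, Measurable (h k)) (hindep : iIndepFun h μ)
    (hsum : ∀ U : Set E, IsOpen U → 0 ∈ U → ∑' k, μ (h k ⁻¹' U) = ∞) :
    ∀ᵐ ω ∂μ, ∀ u : E, u ≠ 0 → Tendsto
      (fun K : ℕ => sInf ((fun k => ‖inner 𝕜 (h k ω) u‖ ^ 2 / ‖u‖ ^ 2) '' Set.Icc 1 K))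
      atTop (𝓝 0) := by
  filter_upwards [ae_mapClusterPt_of_tsum_measure_preimage_eq_top hmeas hindep hsum]
    with ω hcluster u _
  exact tendsto_csInf_image_Icc_of_mapClusterPt 1 (fun _ => by positivity)
    (mapClusterPt_norm_inner_sq_div_norm_sq hcluster u)

end InterferencePower

/-- Lemma 1 of the OSO paper in its working (i.i.d., full-support) model.  Let
`h 0, h 1, h 2, …` be i.i.d. random vectors in `ℂ^L` (here `h 0` plays the role of the
primary channel `h₁` of the paper and `h k`, `k ≥ 1`, the candidate channels
`h₂, h₃, …`) whose common law has full topological support (every nonempty open set has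
positive probability) and no atom at `0` (i.e. `P(h 0 = 0) = 0`).  Then the interference
power `β_K := min_{1 ≤ k ≤ K} ‖⟨h k, h 0⟩‖² / ‖h 0‖²` converges to `0` almost surely as
`K → ∞`. -/
theorem oso_interference_power_tendsto_zero_ae_iid_full_support
    {Ω : Type*} [MeasurableSpace Ω] (μ : Measure Ω) [IsProbabilityMeasure μ]
    (L : ℕ) (h : ℕ → Ω → EuclideanSpace ℂ (Fin L))
    (hmeas : ∀ k, Measurable (h k))
    (hindep : iIndepFun h μ)
    (hident : ∀ k, Measure.map (h k) μ = Measure.map (h 0) μ)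
    (hsupp : ∀ U : Set (EuclideanSpace ℂ (Fin L)), IsOpen U → U.Nonempty →
      0 < Measure.map (h 0) μ U)
    (hprim : μ {ω | h 0 ω = 0} = 0) :
    ∀ᵐ ω ∂μ, Tendsto
      (fun K : ℕ =>
        sInf ((fun k => ‖(inner ℂ (h k ω) (h 0 ω) : ℂ)‖ ^ 2 / ‖h 0 ω‖ ^ 2) '' Set.Icc 1 K))
      atTop (nhds 0) := by
  have hsum (U : Set (EuclideanSpace ℂ (Fin L))) (hU : IsOpen U) (h0U : 0 ∈ U) :
      ∑' k, μ (h k ⁻¹' U) = ∞ :=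
    tsum_measure_preimage_eq_top_of_map_eq (fun k => (hmeas k).aemeasurable) hident
      hU.measurableSet (hsupp U hU ⟨0, h0U⟩).ne'
  filter_upwards [oso_interference_power_tendsto_zero_ae_iid_full_support_general (𝕜 := ℂ)
    hmeas hindep hsum, measure_eq_zero_iff_ae_notMem.1 hprim] with ω hω hne
  exact hω (h 0 ω) hne
end
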